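/- Let s and e be composable labelled transition systems and let i_s, i_e be input-enabled transition systems with I_{i_s} = I_s, U_{i_s} = U_s, I_{i_e} = I_e and U_{i_e} = U_e. If i_s mutually accepts e, i_e mutually accepts s, i_s uioco s, and i_e uioco e, then i_s ∥ i_e uioco s ∥ e. -/

import Mathlib

/-- Labels extended with the quiescence label `δ`. -/
inductive ELabel (Lab : Type) : Type
  | lab : Lab → ELabel Lab
  | delta : ELabel Lab

namespace ELabel

/-- Membership of an extended label in `𝓛^δ = 𝓛 ∪ {δ}`. -/
def inL {Lab : Type} (Ls : Set Lab) : ELabel Lab → Prop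
  | lab ℓ => ℓ ∈ Ls
  | delta => True

end ELabel

/-- A trace lies in `(𝓛^δ)*`. -/
def TraceIn {Lab : Type} (Ls : Set Lab) (σ : List (ELabel Lab)) : Prop :=
  ∀ x ∈ σ, ELabel.inL Ls x

/-- A labelled transition system.  `T q none q'` is an internal `τ`-step,
`T q (some ℓ) q'` is a step labelled `ℓ`. -/
structure LTS (Q : Type) (Lab : Type) where
  I : Set Lab
  U : Set Lab
  T : Q → Option Lab → Q → Prop
  q0 : Q

namespace LTS

variable {Q Lab : Type}

/-- The label set `L = I ∪ U`. -/
def L (M : LTS Q Lab) : Set Lab := M.I ∪ M.U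

/-- Standing assumptions on all LTSs: countable, disjoint input/output label
sets, transitions labelled within `L`, strong convergence (no infinite
`τ`-sequences), and image-finiteness. -/
def WellFormed (M : LTS Q Lab) : Prop :=
  M.I.Countable ∧ M.U.Countable ∧ Disjoint M.I M.U ∧
  (∀ q ℓ q', M.T q (some ℓ) q' → ℓ ∈ M.L) ∧
  (¬ ∃ f : ℕ → Q, ∀ n, M.T (f n) none (f (n + 1))) ∧
  (∀ q a, {q' | M.T q a q'}.Finite)

/-- A state is quiescent if neither an output nor `τ` is enabled in it. -/
def Quiescent (M : LTS Q Lab) (q : Q) : Prop :=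
  (∀ x ∈ M.U, ∀ q', ¬ M.T q (some x) q') ∧ ∀ q', ¬ M.T q none q'

/-- A single visible step `q --x--> q'` for `x ∈ L^δ`, where the quiescence
label `δ` gives a self-loop at quiescent states. -/
def VStep (M : LTS Q Lab) (q : Q) : ELabel Lab → Q → Prop
  | .lab ℓ, q' => M.T q (some ℓ) q'
  | .delta, q' => q' = q ∧ M.Quiescent q

/-- Zero or more `τ`-steps: `q ==ε==> q'`. -/
def Eps (M : LTS Q Lab) : Q → Q → Prop :=
  Relation.ReflTransGen fun a b => M.T a none b

/-- Weak transition `q ==σ==> q'` for `σ ∈ (L^δ)*`. -/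
inductive W (M : LTS Q Lab) : Q → List (ELabel Lab) → Q → Prop
  | nil {q q' : Q} : M.Eps q q' → W M q [] q'
  | snoc {q q1 q2 q' : Q} {σ : List (ELabel Lab)} {x : ELabel Lab} :
      W M q σ q1 → M.VStep q1 x q2 → M.Eps q2 q' → W M q (σ ++ [x]) q'

/-- `X after σ`, for a set of states `X`. -/
def afterSet (M : LTS Q Lab) (X : Set Q) (σ : List (ELabel Lab)) : Set Q :=
  {q' | ∃ q ∈ X, M.W q σ q'}

/-- `M after σ`, from the initial state. -/
def after (M : LTS Q Lab) (σ : List (ELabel Lab)) : Set Q :=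
  {q' | M.W M.q0 σ q'}

/-- The predicate underlying `out(q) ⊆ U ∪ {δ}`. -/
def outLabel (M : LTS Q Lab) (q : Q) : ELabel Lab → Prop
  | .lab ℓ => ℓ ∈ M.U ∧ ∃ q', M.T q (some ℓ) q'
  | .delta => M.Quiescent q

/-- `out(q)`. -/
def outq (M : LTS Q Lab) (q : Q) : Set (ELabel Lab) :=
  {x | M.outLabel q x}

/-- `in(q) = {ℓ ∈ I | q ==ℓ==>}`. -/
def inq (M : LTS Q Lab) (q : Q) : Set Lab :=
  {ℓ | ℓ ∈ M.I ∧ ∃ q', M.W q [ELabel.lab ℓ] q'}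

/-- `out(X) = ⋃_{q ∈ X} out(q)`. -/
def outSet (M : LTS Q Lab) (X : Set Q) : Set (ELabel Lab) :=
  ⋃ q ∈ X, M.outq q

/-- `in(X) = ⋂_{q ∈ X} in(q)`. -/
def inSet (M : LTS Q Lab) (X : Set Q) : Set Lab :=
  ⋂ q ∈ X, M.inq q

/-- Input-enabledness: `M` is an IOTS. -/
def InputEnabled (M : LTS Q Lab) : Prop :=
  ∀ q, ∀ ℓ ∈ M.I, ∃ q', M.W q [ELabel.lab ℓ] q'

/-- `Utraces(M)`. -/
def Utraces (M : LTS Q Lab) : Set (List (ELabel Lab)) :=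
  {σ | TraceIn M.L σ ∧ (∃ q', M.W M.q0 σ q') ∧
    ∀ σ1 ℓ σ2, σ = σ1 ++ ELabel.lab ℓ :: σ2 → ℓ ∈ M.I →
      ∀ q, M.W M.q0 σ1 q → ∃ q', M.W q [ELabel.lab ℓ] q'}

/-- An LTS is utrace-closed when every trace over `(L^δ)*` that it can
perform is a utrace. -/
def UtraceClosed (M : LTS Q Lab) : Prop :=
  ∀ σ : List (ELabel Lab), TraceIn M.L σ → (∃ q', M.W M.q0 σ q') → σ ∈ M.Utraces

end LTS

/-- `i uioco s`. -/
def Uioco {Qi Qs Lab : Type} (i : LTS Qi Lab) (s : LTS Qs Lab) : Prop :=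
  ∀ σ ∈ s.Utraces, i.outSet (i.after σ) ⊆ s.outSet (s.after σ)

/-- Composability: disjoint output label sets. -/
def Composable {Qs Qe Lab : Type} (s : LTS Qs Lab) (e : LTS Qe Lab) : Prop :=
  s.U ∩ e.U = ∅

/-- Parallel composition `s ∥ e`. -/
def par {Qs Qe Lab : Type} (s : LTS Qs Lab) (e : LTS Qe Lab) : LTS (Qs × Qe) Lab where
  I := (s.I \ e.U) ∪ (e.I \ s.U)
  U := s.U ∪ e.U
  T := fun p a p' =>
    match a with
    | none =>
        (s.T p.1 none p'.1 ∧ p'.2 = p.2) ∨ (e.T p.2 none p'.2 ∧ p'.1 = p.1)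
    | some ℓ =>
        (ℓ ∈ s.L ∧ ℓ ∉ e.L ∧ s.T p.1 (some ℓ) p'.1 ∧ p'.2 = p.2) ∨
        (ℓ ∈ e.L ∧ ℓ ∉ s.L ∧ e.T p.2 (some ℓ) p'.2 ∧ p'.1 = p.1) ∨
        (ℓ ∈ s.L ∧ ℓ ∈ e.L ∧ s.T p.1 (some ℓ) p'.1 ∧ e.T p.2 (some ℓ) p'.2)
  q0 := (s.q0, e.q0)

/-- `s accepts e`: along utraces of `s ∥ e`, every output of `e` that is an
input of `s` is (weakly) enabled in `s`. -/
def Accepts {Qs Qe Lab : Type} (s : LTS Qs Lab) (e : LTS Qe Lab) : Prop :=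
  ∀ σ ∈ (par s e).Utraces, ∀ qs qe, (par s e).W (par s e).q0 σ (qs, qe) →
    ∀ ℓ, ELabel.lab ℓ ∈ e.outq qe → ℓ ∈ s.I → ℓ ∈ s.inq qs

/-- `s mutually accepts e`. -/
def MutuallyAccepts {Qs Qe Lab : Type} (s : LTS Qs Lab) (e : LTS Qe Lab) : Prop :=
  Accepts s e ∧ Accepts e s

/-- `R` is an ecosim for `s` and `e`. -/
def IsEcosim {Qs Qe Lab : Type} (s : LTS Qs Lab) (e : LTS Qe Lab)
    (R : Set (Set Qs × Set Qe)) : Prop :=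
  (s.after [], e.after []) ∈ R ∧
  ∀ Xs Xe, (Xs, Xe) ∈ R →
    (∀ ℓ, ELabel.lab ℓ ∈ e.outSet Xe → ℓ ∈ s.I →
      ℓ ∈ s.inSet Xs ∧
        (s.afterSet Xs [ELabel.lab ℓ], e.afterSet Xe [ELabel.lab ℓ]) ∈ R) ∧
    (∀ ℓ, ELabel.lab ℓ ∈ s.outSet Xs → ℓ ∈ e.I →
      ℓ ∈ e.inSet Xe ∧
        (s.afterSet Xs [ELabel.lab ℓ], e.afterSet Xe [ELabel.lab ℓ]) ∈ R) ∧
    (∀ ℓ, (ELabel.lab ℓ ∈ e.outSet Xe ∨ ℓ ∈ e.inSet Xe) → ℓ ∉ s.L →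
      (Xs, e.afterSet Xe [ELabel.lab ℓ]) ∈ R) ∧
    (∀ ℓ, (ELabel.lab ℓ ∈ s.outSet Xs ∨ ℓ ∈ s.inSet Xs) → ℓ ∉ e.L →
      (s.afterSet Xs [ELabel.lab ℓ], Xe) ∈ R) ∧
    (∀ ℓ, ℓ ∈ s.inSet Xs → ℓ ∈ e.inSet Xe →
      (s.afterSet Xs [ELabel.lab ℓ], e.afterSet Xe [ELabel.lab ℓ]) ∈ R) ∧
    (ELabel.delta ∈ s.outSet Xs → ELabel.delta ∈ e.outSet Xe →
      (s.afterSet Xs [ELabel.delta], e.afterSet Xe [ELabel.delta]) ∈ R)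

/-- `s eco e`: there exists an ecosim for `s` and `e`. -/
def Eco {Qs Qe Lab : Type} (s : LTS Qs Lab) (e : LTS Qe Lab) : Prop :=
  ∃ R, IsEcosim s e R

/-- `R_U(s,e)`: the smallest relation closed under the given rules. -/
inductive RU {Qs Qe Lab : Type} (s : LTS Qs Lab) (e : LTS Qe Lab) :
    Set Qs → Set Qe → Prop
  | base : RU s e (s.after []) (e.after [])
  | syncOutE {Xs : Set Qs} {Xe : Set Qe} (ℓ : Lab) :
      RU s e Xs Xe → ELabel.lab ℓ ∈ e.outSet Xe → ℓ ∈ s.I →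
      RU s e (s.afterSet Xs [ELabel.lab ℓ]) (e.afterSet Xe [ELabel.lab ℓ])
  | syncOutS {Xs : Set Qs} {Xe : Set Qe} (ℓ : Lab) :
      RU s e Xs Xe → ELabel.lab ℓ ∈ s.outSet Xs → ℓ ∈ e.I →
      RU s e (s.afterSet Xs [ELabel.lab ℓ]) (e.afterSet Xe [ELabel.lab ℓ])
  | internalE {Xs : Set Qs} {Xe : Set Qe} (ℓ : Lab) :
      RU s e Xs Xe → (ELabel.lab ℓ ∈ e.outSet Xe ∨ ℓ ∈ e.inSet Xe) → ℓ ∉ s.L →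
      RU s e Xs (e.afterSet Xe [ELabel.lab ℓ])
  | internalS {Xs : Set Qs} {Xe : Set Qe} (ℓ : Lab) :
      RU s e Xs Xe → (ELabel.lab ℓ ∈ s.outSet Xs ∨ ℓ ∈ s.inSet Xs) → ℓ ∉ e.L →
      RU s e (s.afterSet Xs [ELabel.lab ℓ]) Xe
  | syncIn {Xs : Set Qs} {Xe : Set Qe} (ℓ : Lab) :
      RU s e Xs Xe → ℓ ∈ s.inSet Xs → ℓ ∈ e.inSet Xe →
      RU s e (s.afterSet Xs [ELabel.lab ℓ]) (e.afterSet Xe [ELabel.lab ℓ])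
  | qdelta {Xs : Set Qs} {Xe : Set Qe} :
      RU s e Xs Xe → ELabel.delta ∈ s.outSet Xs → ELabel.delta ∈ e.outSet Xe →
      RU s e (s.afterSet Xs [ELabel.delta]) (e.afterSet Xe [ELabel.delta])

open Classical in
/-- Projection `σ↾𝓛^δ` of a trace onto an (extended) label set: keeps `δ`
and the labels in `Ls`, removes all other labels. -/
noncomputable def projD {Lab : Type} (σ : List (ELabel Lab)) (Ls : Set Lab) :
    List (ELabel Lab) :=
  σ.filter fun x => decide (ELabel.inL Ls x)

open Classical in
/-- Projection `σ↾𝓛` of a trace of plain labels onto a label set. -/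
noncomputable def projL {Lab : Type} (σ : List Lab) (Ls : Set Lab) : List Lab :=
  σ.filter fun ℓ => decide (ℓ ∈ Ls)

open Classical in
/-- Substitution `σ[θ/δ]` of the label `θ` by the quiescence label `δ`. -/
noncomputable def substTheta {Lab : Type} (θ : Lab) (σ : List Lab) :
    List (ELabel Lab) :=
  σ.map fun ℓ => if ℓ = θ then ELabel.delta else ELabel.lab ℓ

/-- `⟨X⟩`: componentwise collection of a set of pairs of states. -/
def collect {Qs Qe : Type} (X : Set (Qs × Qe)) : Set Qs × Set Qe :=
  (Prod.fst '' X, Prod.snd '' X)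

/-- `q_s accepts q_e over σ`. -/
def AcceptsOver {Qs Qe Lab : Type} (s : LTS Qs Lab) (e : LTS Qe Lab)
    (qs : Qs) (qe : Qe) (σ : List (ELabel Lab)) : Prop :=
  ∀ σ1 σ2 : List (ELabel Lab), σ1 ++ σ2 = σ →
    ∀ (qs' : Qs) (qe' : Qe), (par s e).W (qs, qe) σ1 (qs', qe') →
      ∀ ℓ, ELabel.lab ℓ ∈ e.outq qe' → ℓ ∈ s.I → ℓ ∈ s.inq qs' ∧ ℓ ∈ e.U

/-- `q_s mutually accepts q_e over σ`. -/
def MutuallyAcceptsOver {Qs Qe Lab : Type} (s : LTS Qs Lab) (e : LTS Qe Lab)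
    (qs : Qs) (qe : Qe) (σ : List (ELabel Lab)) : Prop :=
  AcceptsOver s e qs qe σ ∧ AcceptsOver e s qe qs σ

/-- A test case: a quasi-finite tree-shaped LTS without `τ`-transitions, with
terminal states `pass` and `fail` carrying input self-loops, a special
quiescence-observation input `θ`, at most one output transition per state,
and receptive to all inputs other than `θ`. -/
structure TestCase (Qt Lab : Type) extends LTS Qt Lab where
  passS : Qt
  failS : Qt
  theta : Lab
  theta_input : theta ∈ I
  no_tau : ∀ q q', ¬ T q none q'
  tree : ∀ q, q ≠ q0 → q ≠ passS → q ≠ failS →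
    ∃! p : Qt × Option Lab, T p.1 p.2 q
  pass_loops : ∀ ℓ ∈ I, T passS (some ℓ) passS
  pass_terminal : ∀ a q', T passS a q' → q' = passS ∧ ∃ ℓ ∈ I, a = some ℓ
  fail_loops : ∀ ℓ ∈ I, T failS (some ℓ) failS
  fail_terminal : ∀ a q', T failS a q' → q' = failS ∧ ∃ ℓ ∈ I, a = some ℓ
  one_output : ∀ q ℓ ℓ' q' q'', ℓ ∈ U → ℓ' ∈ U →
    T q (some ℓ) q' → T q (some ℓ') q'' → ℓ = ℓ' ∧ q' = q''
  receptive : ∀ q, ∀ ℓ ∈ I, ℓ ≠ theta → ∃ q', T q (some ℓ) q'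

/-- Test execution `t ⫿ i` of a test case `t` with an implementation `i`. -/
def testExec {Qt Qi Lab : Type} (t : TestCase Qt Lab) (i : LTS Qi Lab) :
    LTS (Qt × Qi) Lab where
  I := ∅
  U := i.U ∪ (t.toLTS.L \ {t.theta})
  T := fun p a p' =>
    match a with
    | none => i.T p.2 none p'.2 ∧ p'.1 = p.1
    | some ℓ =>
        (ℓ ∈ i.L ∧ ℓ ∉ t.toLTS.L ∧ i.T p.2 (some ℓ) p'.2 ∧ p'.1 = p.1) ∨
        (ℓ ∈ t.toLTS.L ∧ ℓ ∉ i.L ∧ ℓ ≠ t.theta ∧ t.T p.1 (some ℓ) p'.1 ∧ p'.2 = p.2) ∨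
        (ℓ ∈ i.L ∧ ℓ ∈ t.toLTS.L ∧ t.T p.1 (some ℓ) p'.1 ∧ i.T p.2 (some ℓ) p'.2) ∨
        (ℓ = t.theta ∧ t.T p.1 (some ℓ) p'.1 ∧ p'.2 = p.2 ∧ i.Quiescent p.2)
  q0 := (t.q0, i.q0)

/-!
A joint step of `M ∥ N` is a pair of component steps, where a component idles on labels outside its
alphabet; hence runs of `M ∥ N` over `σ` are pairs of runs over the projections of `σ`. The only
exception is `δ`: the composition may be quiescent because an output of one component is blocked by
the other, which acceptance rules out.

The core is that a utrace `σ` of `s ∥ e` executable by `iS ∥ iE` projects to utraces of `s` and `e`,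
by induction on `σ`. An input of `s` occurring in `σ` is either an input of `s ∥ e`, hence enabled
because `σ` is a utrace, or an output of `iE`, hence enabled because `s` accepts `iE`; every other
label is provided by `iS uioco s`. Outputs of `iS ∥ iE` after `σ` can then be transferred to the
specifications one component at a time.
-/

section Traces

variable {Lab : Type} {A : Set Lab} {σ : List (ELabel Lab)} {x : ELabel Lab}

theorem traceIn_snoc_iff : TraceIn A (σ ++ [x]) ↔ TraceIn A σ ∧ x.inL A := by
  simp only [TraceIn, List.forall_mem_append, List.forall_mem_singleton]

theorem projD_snoc_of_inL (hx : x.inL A) : projD (σ ++ [x]) A = projD σ A ++ [x] := by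
  simp [projD, List.filter_append, hx]

theorem projD_snoc_of_not_inL (hx : ¬ x.inL A) :
    projD (σ ++ [x]) A = projD σ A := by
  simp [projD, List.filter_append, hx]

end Traces

namespace LTS

section WeakTransitions

variable {Q Lab : Type} {M : LTS Q Lab} {q q' q'' : Q} {σ τ : List (ELabel Lab)} {x : ELabel Lab}
  {ℓ : Lab}

theorem Eps.eq_of_no_tau (h : M.Eps q q') (hq : ∀ p, ¬ M.T q none p) : q' = q :=
  (Relation.ReflTransGen.cases_head h).elim Eq.symm fun ⟨p, hp, _⟩ => absurd hp (hq p)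

theorem W_nil_iff : M.W q [] q' ↔ M.Eps q q' := by
  refine ⟨fun h => ?_, W.nil⟩
  generalize hσ : ([] : List (ELabel Lab)) = σ at h
  cases h with
  | nil h => exact h
  | snoc => simp at hσ

theorem W_snoc_iff :
    M.W q (σ ++ [x]) q' ↔ ∃ q₁ q₂, M.W q σ q₁ ∧ M.VStep q₁ x q₂ ∧ M.Eps q₂ q' := by
  refine ⟨fun h => ?_, fun ⟨_, _, hσ, hx, hε⟩ => W.snoc hσ hx hε⟩
  generalize hτ : σ ++ [x] = τ at h
  cases h with
  | nil => simp at hτ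
  | snoc hσ hx hε =>
    obtain ⟨rfl, hxy⟩ := List.append_inj' hτ rfl
    obtain rfl := List.singleton_inj.1 hxy
    exact ⟨_, _, hσ, hx, hε⟩

theorem W_singleton_iff :
    M.W q [x] q' ↔ ∃ q₁ q₂, M.Eps q q₁ ∧ M.VStep q₁ x q₂ ∧ M.Eps q₂ q' := by
  simpa only [List.nil_append, W_nil_iff] using W_snoc_iff (M := M) (q := q) (q' := q') (σ := [])

theorem W.trans_eps (h : M.W q σ q') (hε : M.Eps q' q'') : M.W q σ q'' := by
  cases h with
  | nil h => exact W.nil (h.trans hε)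
  | snoc hσ hx h => exact W.snoc hσ hx (h.trans hε)

theorem W.trans_singleton (h : M.W q σ q') (hx : M.W q' [x] q'') : M.W q (σ ++ [x]) q'' := by
  obtain ⟨_, _, hε, hstep, hε'⟩ := W_singleton_iff.1 hx
  exact W.snoc (h.trans_eps hε) hstep hε'

theorem mem_outSet_iff {X : Set Q} : x ∈ M.outSet X ↔ ∃ q ∈ X, x ∈ M.outq q := by
  simp only [outSet, Set.mem_iUnion, exists_prop]

theorem mem_inSet_iff {X : Set Q} : ℓ ∈ M.inSet X ↔ ∀ q ∈ X, ℓ ∈ M.inq q := by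
  simp only [inSet, Set.mem_iInter]

theorem after_snoc_nonempty_of_mem_outSet (hx : x ∈ M.outSet (M.after σ)) :
    (M.after (σ ++ [x])).Nonempty := by
  obtain ⟨q, hq, hout⟩ := mem_outSet_iff.1 hx
  cases x with
  | lab ℓ =>
    obtain ⟨-, q', hstep⟩ := hout
    exact ⟨q', W.snoc hq hstep .refl⟩
  | delta => exact ⟨q, W.snoc hq ⟨rfl, hout⟩ .refl⟩

theorem after_snoc_nonempty_of_mem_inSet (hσ : (M.after σ).Nonempty)
    (hℓ : ℓ ∈ M.inSet (M.after σ)) : (M.after (σ ++ [.lab ℓ])).Nonempty := by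
  obtain ⟨q, hq⟩ := hσ
  obtain ⟨-, q', hstep⟩ := mem_inSet_iff.1 hℓ q hq
  exact ⟨q', hq.trans_singleton hstep⟩

theorem nil_mem_utraces : [] ∈ M.Utraces := by
  refine ⟨by simp [TraceIn], ⟨M.q0, W.nil .refl⟩, fun σ₁ ℓ σ₂ h => ?_⟩
  simp at h

theorem snoc_mem_utraces_iff :
    σ ++ [x] ∈ M.Utraces ↔ σ ∈ M.Utraces ∧ x.inL M.L ∧ (M.after (σ ++ [x])).Nonempty ∧
      ∀ ℓ ∈ M.I, x = .lab ℓ → ℓ ∈ M.inSet (M.after σ) := by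
  constructor
  · rintro ⟨htrace, ⟨q', hq'⟩, hin⟩
    obtain ⟨hσ, hx⟩ := traceIn_snoc_iff.1 htrace
    obtain ⟨q, -, hq, -, -⟩ := W_snoc_iff.1 hq'
    refine ⟨⟨hσ, ⟨q, hq⟩, ?_⟩, hx, ⟨q', hq'⟩, ?_⟩
    · rintro σ₁ ℓ σ₂ rfl
      exact hin σ₁ ℓ (σ₂ ++ [x]) (by simp)
    · rintro ℓ hℓ rfl
      exact mem_inSet_iff.2 fun p hp => ⟨hℓ, hin σ ℓ [] rfl hℓ p hp⟩
  · rintro ⟨⟨htrace, -, hin⟩, hx, hne, hlast⟩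
    refine ⟨traceIn_snoc_iff.2 ⟨htrace, hx⟩, hne, fun σ₁ ℓ σ₂ heq hℓ p hp => ?_⟩
    rcases List.eq_nil_or_concat σ₂ with rfl | ⟨σ₃, y, rfl⟩
    · obtain ⟨rfl, hxℓ⟩ := List.append_inj' heq rfl
      exact (mem_inSet_iff.1 (hlast ℓ hℓ (List.singleton_inj.1 hxℓ)) p hp).2
    · have heq' : σ ++ [x] = (σ₁ ++ .lab ℓ :: σ₃) ++ [y] := by simp [heq]
      exact hin σ₁ ℓ σ₃ (List.append_inj' heq' rfl).1 hℓ p hp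

theorem mem_utraces_of_append (h : σ ++ τ ∈ M.Utraces) : σ ∈ M.Utraces := by
  induction τ using List.reverseRecOn with
  | nil => simpa using h
  | append_singleton τ x ih => exact ih (snoc_mem_utraces_iff.1 (List.append_assoc .. ▸ h)).1

end WeakTransitions

section LocalSteps

variable {Q Lab : Type} {M : LTS Q Lab} {q q' : Q} {σ : List (ELabel Lab)} {x : ELabel Lab}
  {ℓ : Lab}

/-- The contribution of the component `M` to a joint step labelled `x` of a parallel composition:
`M` performs `x` if `x` belongs to its alphabet `L^δ`, and idles otherwise. -/
def LocalStep (M : LTS Q Lab) (q : Q) (x : ELabel Lab) (q' : Q) : Prop :=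
  x.inL M.L ∧ M.VStep q x q' ∨ ¬ x.inL M.L ∧ q' = q

theorem LocalStep.vStep (h : M.LocalStep q x q') (hx : x.inL M.L) : M.VStep q x q' :=
  h.elim And.right fun h => absurd hx h.1

theorem LocalStep.mem_outq (h : M.LocalStep q (.lab ℓ) q') (hℓ : ℓ ∈ M.U) : .lab ℓ ∈ M.outq q :=
  ⟨hℓ, q', h.vStep (.inr hℓ)⟩

theorem exists_eps_localStep_iff :
    (∃ q₁ q₂, M.Eps q q₁ ∧ M.LocalStep q₁ (.lab ℓ) q₂) ↔
      (ℓ ∈ M.L → ∃ q', M.W q [.lab ℓ] q') := by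
  constructor
  · rintro ⟨q₁, q₂, hε, hstep⟩ hL
    exact ⟨q₂, W_singleton_iff.2 ⟨q₁, q₂, hε, hstep.vStep hL, .refl⟩⟩
  · intro h
    by_cases hL : ℓ ∈ M.L
    · obtain ⟨_, hrun⟩ := h hL
      obtain ⟨q₁, q₂, hε, hstep, -⟩ := W_singleton_iff.1 hrun
      exact ⟨q₁, q₂, hε, .inl ⟨hL, hstep⟩⟩
    · exact ⟨q, q, .refl, .inr ⟨hL, rfl⟩⟩

theorem W_projD_snoc_iff :
    M.W q (projD (σ ++ [x]) M.L) q' ↔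
      ∃ q₁ q₂, M.W q (projD σ M.L) q₁ ∧ M.LocalStep q₁ x q₂ ∧ M.Eps q₂ q' := by
  by_cases hx : x.inL M.L
  · simp only [projD_snoc_of_inL hx, W_snoc_iff, LocalStep, hx, true_and, not_true_eq_false,
      false_and, or_false]
  · rw [projD_snoc_of_not_inL hx]
    constructor
    · exact fun h => ⟨q', q', h, .inr ⟨hx, rfl⟩, .refl⟩
    · rintro ⟨q₁, q₂, h, ⟨hx', -⟩ | ⟨-, rfl⟩, hε⟩
      · exact absurd hx' hx
      · exact h.trans_eps hε

theorem projD_mem_utraces_of_snoc {A : Set Lab} (h : projD (σ ++ [x]) A ∈ M.Utraces) :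
    projD σ A ∈ M.Utraces := by
  rw [projD, List.filter_append] at h
  exact mem_utraces_of_append h

theorem mem_inSet_of_projD_snoc_mem_utraces (hI : ℓ ∈ M.I)
    (h : projD (σ ++ [.lab ℓ]) M.L ∈ M.Utraces) : ℓ ∈ M.inSet (M.after (projD σ M.L)) := by
  rw [projD_snoc_of_inL (x := .lab ℓ) (.inl hI)] at h
  exact (snoc_mem_utraces_iff.1 h).2.2.2 ℓ hI rfl

end LocalSteps

end LTS

section Acceptance

variable {Qm Qn Lab : Type} {M : LTS Qm Lab} {N : LTS Qn Lab} {m m' : Qm} {n n' : Qn}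
  {σ : List (ELabel Lab)} {ℓ : Lab}

theorem Composable.symm (h : Composable M N) : Composable N M :=
  (Set.inter_comm _ _).trans h

/-- The state `m` of `M` accepts the state `n` of `N`: every output of `n` that is an input of `M`
is weakly enabled in `m`. This is the condition that `Accepts` imposes on jointly reachable
states. -/
def AcceptsAt (M : LTS Qm Lab) (N : LTS Qn Lab) (m : Qm) (n : Qn) : Prop :=
  ∀ ℓ, .lab ℓ ∈ N.outq n → ℓ ∈ M.I → ℓ ∈ M.inq m

theorem LTS.InputEnabled.acceptsAt (hM : M.InputEnabled) : AcceptsAt M N m n :=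
  fun ℓ _ hI => ⟨hI, hM m ℓ hI⟩

theorem LTS.InputEnabled.acceptsOver (hM : M.InputEnabled) : AcceptsOver M N m n σ :=
  fun _ _ _ _ _ _ ℓ hout hI => ⟨hM.acceptsAt ℓ hout hI, hout.1⟩

theorem Accepts.acceptsOver (h : Accepts M N) (hσ : σ ∈ (par M N).Utraces) :
    AcceptsOver M N M.q0 N.q0 σ := by
  rintro σ₁ σ₂ rfl m n hmn ℓ hout hI
  exact ⟨h σ₁ (LTS.mem_utraces_of_append hσ) m n hmn ℓ hout hI, hout.1⟩

theorem AcceptsOver.of_append {τ : List (ELabel Lab)} (h : AcceptsOver M N m n (σ ++ τ)) :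
    AcceptsOver M N m n σ := by
  rintro σ₁ σ₂ rfl
  exact h σ₁ (σ₂ ++ τ) (List.append_assoc ..).symm

theorem AcceptsOver.acceptsAt (h : AcceptsOver M N m n σ)
    (hrun : (par M N).W (m, n) σ (m', n')) : AcceptsAt M N m' n' :=
  fun ℓ hout hI => (h σ [] (List.append_nil σ) m' n' hrun ℓ hout hI).1

theorem AcceptsAt.exists_eps_localStep (h : AcceptsAt N M n m) (hMN : Composable M N)
    (hout : .lab ℓ ∈ M.outq m) : ∃ n₁ n₂, N.Eps n n₁ ∧ N.LocalStep n₁ (.lab ℓ) n₂ := by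
  have hU : ℓ ∉ N.U := fun hU => Set.eq_empty_iff_forall_notMem.1 hMN ℓ ⟨hout.1, hU⟩
  exact LTS.exists_eps_localStep_iff.2 fun hL => (h ℓ hout (hL.resolve_right hU)).2

end Acceptance

namespace LTS

section ParallelComposition

variable {Qm Qn Lab : Type} {M : LTS Qm Lab} {N : LTS Qn Lab} {m m' : Qm} {n n' : Qn}
  {σ : List (ELabel Lab)} {x : ELabel Lab} {ℓ : Lab}

theorem par_L : (par M N).L = M.L ∪ N.L := by
  ext ℓ
  simp only [L, par, Set.mem_union, Set.mem_sdiff]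
  tauto

theorem mem_I_left_of_mem_par_I (hI : ℓ ∈ (par M N).I) (hL : ℓ ∈ M.L) : ℓ ∈ M.I :=
  hI.elim And.left fun h => hL.resolve_right h.2

theorem mem_I_right_of_mem_par_I (hI : ℓ ∈ (par M N).I) (hL : ℓ ∈ N.L) : ℓ ∈ N.I :=
  hI.elim (fun h => hL.resolve_right h.2) And.left

theorem par_eps_iff : (par M N).Eps (m, n) (m', n') ↔ M.Eps m m' ∧ N.Eps n n' := by
  constructor
  · intro h
    refine ⟨h.lift' Prod.fst fun p p' hstep => ?_, h.lift' Prod.snd fun p p' hstep => ?_⟩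
    · exact hstep.elim (fun h => .single h.1) fun h => by rw [Function.onFun, h.2]
    · exact hstep.elim (fun h => by rw [Function.onFun, h.2]) fun h => .single h.1
  · rintro ⟨hm, hn⟩
    have hleft : (par M N).Eps (m, n) (m', n) := hm.lift (·, n) fun _ _ h => .inl ⟨h, rfl⟩
    have hright : (par M N).Eps (m', n) (m', n') := hn.lift (m', ·) fun _ _ h => .inr ⟨h, rfl⟩
    exact hleft.trans hright

theorem par_T_some_iff :
    (par M N).T (m, n) (some ℓ) (m', n') ↔
      ℓ ∈ M.L ∪ N.L ∧ M.LocalStep m (.lab ℓ) m' ∧ N.LocalStep n (.lab ℓ) n' := by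
  simp only [par, LocalStep, VStep, ELabel.inL, Set.mem_union]
  tauto

theorem Quiescent.par_mk (hm : M.Quiescent m) (hn : N.Quiescent n) :
    (par M N).Quiescent (m, n) := by
  constructor
  · rintro ℓ hℓ ⟨m', n'⟩ hstep
    obtain ⟨-, hstepM, hstepN⟩ := par_T_some_iff.1 hstep
    rcases hℓ with hℓ | hℓ
    · exact hm.1 ℓ hℓ m' (hstepM.vStep (.inr hℓ))
    · exact hn.1 ℓ hℓ n' (hstepN.vStep (.inr hℓ))
  · rintro ⟨m', n'⟩ (⟨hτ, -⟩ | ⟨hτ, -⟩)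
    · exact hm.2 m' hτ
    · exact hn.2 n' hτ

theorem Quiescent.of_par (hMN : Composable M N) (hmn : AcceptsAt M N m n)
    (hnm : AcceptsAt N M n m) (h : (par M N).Quiescent (m, n)) :
    M.Quiescent m ∧ N.Quiescent n := by
  have hτm (m') : ¬ M.T m none m' := fun hτ => h.2 (m', n) (.inl ⟨hτ, rfl⟩)
  have hτn (n') : ¬ N.T n none n' := fun hτ => h.2 (m, n') (.inr ⟨hτ, rfl⟩)
  refine ⟨⟨fun ℓ hℓ m' hstep => ?_, hτm⟩, ⟨fun ℓ hℓ n' hstep => ?_, hτn⟩⟩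
  · obtain ⟨n₁, n₂, hε, hstepN⟩ := hnm.exists_eps_localStep hMN ⟨hℓ, m', hstep⟩
    obtain rfl := hε.eq_of_no_tau hτn
    exact h.1 ℓ (.inl hℓ) (m', n₂)
      (par_T_some_iff.2 ⟨.inl (.inr hℓ), .inl ⟨.inr hℓ, hstep⟩, hstepN⟩)
  · obtain ⟨m₁, m₂, hε, hstepM⟩ := hmn.exists_eps_localStep hMN.symm ⟨hℓ, n', hstep⟩
    obtain rfl := hε.eq_of_no_tau hτm
    exact h.1 ℓ (.inr hℓ) (m₂, n')
      (par_T_some_iff.2 ⟨.inr (.inr hℓ), hstepM, .inl ⟨.inr hℓ, hstep⟩⟩)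

theorem LocalStep.par_vStep (hx : x.inL (M.L ∪ N.L)) (hm : M.LocalStep m x m')
    (hn : N.LocalStep n x n') : (par M N).VStep (m, n) x (m', n') := by
  cases x with
  | lab ℓ => exact par_T_some_iff.2 ⟨hx, hm, hn⟩
  | delta =>
    obtain ⟨rfl, hqm⟩ := hm.vStep trivial
    obtain ⟨rfl, hqn⟩ := hn.vStep trivial
    exact ⟨rfl, hqm.par_mk hqn⟩

theorem VStep.localStep_of_par (hMN : Composable M N) (hmn : AcceptsAt M N m n)
    (hnm : AcceptsAt N M n m) (h : (par M N).VStep (m, n) x (m', n')) :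
    M.LocalStep m x m' ∧ N.LocalStep n x n' := by
  cases x with
  | lab ℓ => exact (par_T_some_iff.1 h).2
  | delta =>
    obtain ⟨heq, hq⟩ := h
    obtain ⟨rfl, rfl⟩ := Prod.mk.inj heq
    obtain ⟨hqm, hqn⟩ := hq.of_par hMN hmn hnm
    exact ⟨.inl ⟨trivial, rfl, hqm⟩, .inl ⟨trivial, rfl, hqn⟩⟩

theorem W.par_of_projD (hσ : TraceIn (M.L ∪ N.L) σ) (hm : M.W m (projD σ M.L) m')
    (hn : N.W n (projD σ N.L) n') : (par M N).W (m, n) σ (m', n') := by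
  induction σ using List.reverseRecOn generalizing m' n' with
  | nil => exact W.nil (par_eps_iff.2 ⟨W_nil_iff.1 hm, W_nil_iff.1 hn⟩)
  | append_singleton σ x ih =>
    obtain ⟨hσ, hx⟩ := traceIn_snoc_iff.1 hσ
    obtain ⟨_, _, hm, hstepM, hεM⟩ := W_projD_snoc_iff.1 hm
    obtain ⟨_, _, hn, hstepN, hεN⟩ := W_projD_snoc_iff.1 hn
    exact W.snoc (ih hσ hm hn) (hstepM.par_vStep hx hstepN) (par_eps_iff.2 ⟨hεM, hεN⟩)

theorem W.projD_of_par (hMN : Composable M N) (hN : N.InputEnabled)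
    (hacc : AcceptsOver M N m n σ) (h : (par M N).W (m, n) σ (m', n')) :
    M.W m (projD σ M.L) m' ∧ N.W n (projD σ N.L) n' := by
  induction σ using List.reverseRecOn generalizing m' n' with
  | nil =>
    obtain ⟨hm, hn⟩ := par_eps_iff.1 (W_nil_iff.1 h)
    exact ⟨W.nil hm, W.nil hn⟩
  | append_singleton σ x ih =>
    obtain ⟨⟨m₁, n₁⟩, ⟨m₂, n₂⟩, hrun, hstep, hε⟩ := W_snoc_iff.1 h
    obtain ⟨hm, hn⟩ := ih hacc.of_append hrun
    obtain ⟨hstepM, hstepN⟩ :=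
      hstep.localStep_of_par hMN (hacc.of_append.acceptsAt hrun) hN.acceptsAt
    obtain ⟨hεM, hεN⟩ := par_eps_iff.1 hε
    exact ⟨W_projD_snoc_iff.2 ⟨_, _, hm, hstepM, hεM⟩, W_projD_snoc_iff.2 ⟨_, _, hn, hstepN, hεN⟩⟩

theorem mem_par_inq_iff (hI : ℓ ∈ (par M N).I) :
    ℓ ∈ (par M N).inq (m, n) ↔ (ℓ ∈ M.L → ℓ ∈ M.inq m) ∧ (ℓ ∈ N.L → ℓ ∈ N.inq n) := by
  constructor
  · rintro ⟨-, ⟨m', n'⟩, hrun⟩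
    obtain ⟨⟨m₁, n₁⟩, ⟨m₂, n₂⟩, hε, hstep, -⟩ := W_singleton_iff.1 hrun
    obtain ⟨hεM, hεN⟩ := par_eps_iff.1 hε
    obtain ⟨-, hstepM, hstepN⟩ := par_T_some_iff.1 hstep
    exact ⟨fun hL => ⟨mem_I_left_of_mem_par_I hI hL,
        exists_eps_localStep_iff.1 ⟨m₁, m₂, hεM, hstepM⟩ hL⟩,
      fun hL => ⟨mem_I_right_of_mem_par_I hI hL,
        exists_eps_localStep_iff.1 ⟨n₁, n₂, hεN, hstepN⟩ hL⟩⟩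
  · rintro ⟨hm, hn⟩
    obtain ⟨m₁, m₂, hεM, hstepM⟩ := exists_eps_localStep_iff.2 fun hL => (hm hL).2
    obtain ⟨n₁, n₂, hεN, hstepN⟩ := exists_eps_localStep_iff.2 fun hL => (hn hL).2
    have hL : ℓ ∈ M.L ∪ N.L := par_L ▸ Or.inl hI
    exact ⟨hI, (m₂, n₂), W_singleton_iff.2 ⟨(m₁, n₁), (m₂, n₂), par_eps_iff.2 ⟨hεM, hεN⟩,
      par_T_some_iff.2 ⟨hL, hstepM, hstepN⟩, .refl⟩⟩

theorem lab_mem_par_outSet (hσ : TraceIn (M.L ∪ N.L) σ) (hU : ℓ ∈ M.U ∪ N.U)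
    (hm : m ∈ M.after (projD σ M.L)) (hstepM : M.LocalStep m (.lab ℓ) m')
    (hn : n ∈ N.after (projD σ N.L)) (hstepN : N.LocalStep n (.lab ℓ) n') :
    .lab ℓ ∈ (par M N).outSet ((par M N).after σ) := by
  have hL : ℓ ∈ M.L ∪ N.L := hU.imp .inr .inr
  exact mem_outSet_iff.2
    ⟨(m, n), W.par_of_projD hσ hm hn, hU, (m', n'), par_T_some_iff.2 ⟨hL, hstepM, hstepN⟩⟩

theorem delta_mem_par_outSet (hσ : TraceIn (M.L ∪ N.L) σ)
    (hM : .delta ∈ M.outSet (M.after (projD σ M.L)))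
    (hN : .delta ∈ N.outSet (N.after (projD σ N.L))) :
    .delta ∈ (par M N).outSet ((par M N).after σ) := by
  obtain ⟨m, hm, hqm⟩ := mem_outSet_iff.1 hM
  obtain ⟨n, hn, hqn⟩ := mem_outSet_iff.1 hN
  exact mem_outSet_iff.2 ⟨(m, n), W.par_of_projD hσ hm hn, Quiescent.par_mk hqm hqn⟩

theorem mem_inq_of_snoc_mem_par_utraces (hσ : σ ++ [.lab ℓ] ∈ (par M N).Utraces)
    (hI : ℓ ∈ (par M N).I) (hm : m ∈ M.after (projD σ M.L)) (hn : n ∈ N.after (projD σ N.L)) :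
    (ℓ ∈ M.L → ℓ ∈ M.inq m) ∧ (ℓ ∈ N.L → ℓ ∈ N.inq n) := by
  obtain ⟨hσ, -, -, hin⟩ := snoc_mem_utraces_iff.1 hσ
  have hmn : (m, n) ∈ (par M N).after σ := W.par_of_projD (par_L ▸ hσ.1) hm hn
  exact (mem_par_inq_iff hI).1 (mem_inSet_iff.1 (hin ℓ hI rfl) (m, n) hmn)

theorem mem_par_utraces_of_projD (hMN : Composable M N) (hN : N.InputEnabled)
    (hacc : Accepts M N) (hσ : TraceIn (M.L ∪ N.L) σ) (hM : projD σ M.L ∈ M.Utraces)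
    (hne : (N.after (projD σ N.L)).Nonempty) : σ ∈ (par M N).Utraces := by
  induction σ using List.reverseRecOn with
  | nil => exact nil_mem_utraces
  | append_singleton σ x ih =>
    obtain ⟨n', hn'⟩ := hne
    obtain ⟨m', hm'⟩ := hM.2.1
    have hrun : (m', n') ∈ (par M N).after (σ ++ [x]) := W.par_of_projD hσ hm' hn'
    obtain ⟨hσ, hx⟩ := traceIn_snoc_iff.1 hσ
    obtain ⟨n₁, -, hn₁, -, -⟩ := W_projD_snoc_iff.1 hn'
    have hutrace : σ ∈ (par M N).Utraces := ih hσ (projD_mem_utraces_of_snoc hM) ⟨n₁, hn₁⟩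
    refine snoc_mem_utraces_iff.2 ⟨hutrace, par_L ▸ hx, ⟨_, hrun⟩, ?_⟩
    rintro ℓ hI rfl
    refine mem_inSet_iff.2 fun (m, n) hmn => (mem_par_inq_iff hI).2 ⟨fun hL => ?_, fun hL => ?_⟩
    · have hm := (W.projD_of_par hMN hN (hacc.acceptsOver hutrace) hmn).1
      have hIM := mem_I_left_of_mem_par_I hI hL
      exact mem_inSet_iff.1 (mem_inSet_of_projD_snoc_mem_utraces hIM hM) m hm
    · have hIN := mem_I_right_of_mem_par_I hI hL
      exact ⟨hIN, hN n ℓ hIN⟩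

theorem acceptsAt_of_mem_after_projD (hMN : Composable M N) (hN : N.InputEnabled)
    (hacc : Accepts M N) (hσ : TraceIn (M.L ∪ N.L) σ) (hM : projD σ M.L ∈ M.Utraces)
    (hm : m ∈ M.after (projD σ M.L)) (hn : n ∈ N.after (projD σ N.L)) : AcceptsAt M N m n :=
  hacc σ (mem_par_utraces_of_projD hMN hN hacc hσ hM ⟨n, hn⟩) m n (W.par_of_projD hσ hm hn)

end ParallelComposition

end LTS

section Implementations

variable {Qs Qe Qis Qie Lab : Type} {s : LTS Qs Lab} {e : LTS Qe Lab} {iS : LTS Qis Lab}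
  {iE : LTS Qie Lab} {σ τ ρ : List (ELabel Lab)} {x : ELabel Lab} {ℓ : Lab}

/-- `iS` is a correct implementation of `s`: an input-enabled system with the same inputs and
outputs such that `iS uioco s`. -/
structure Implements (iS : LTS Qis Lab) (s : LTS Qs Lab) : Prop where
  I_eq : iS.I = s.I
  U_eq : iS.U = s.U
  inputEnabled : iS.InputEnabled
  uioco : Uioco iS s

namespace Implements

theorem L_eq (h : Implements iS s) : iS.L = s.L := by
  rw [LTS.L, LTS.L, h.I_eq, h.U_eq]

theorem composable_left (h : Implements iS s) (hse : Composable s e) : Composable iS e := by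
  rwa [Composable, h.U_eq]

theorem composable_right (h : Implements iE e) (hse : Composable s e) : Composable s iE :=
  (h.composable_left hse.symm).symm

theorem mem_outSet (h : Implements iS s) (hτ : τ ∈ s.Utraces) {p : Qis} (hp : p ∈ iS.after τ)
    (hx : x ∈ iS.outq p) : x ∈ s.outSet (s.after τ) :=
  h.uioco τ hτ (LTS.mem_outSet_iff.2 ⟨p, hp, hx⟩)

theorem snoc_mem_utraces (h : Implements iS s) (hτ : τ ∈ s.Utraces) {p p' : Qis}
    (hp : p ∈ iS.after τ) (hx : x.inL s.L) (hstep : iS.VStep p x p')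
    (hin : ∀ ℓ ∈ s.I, x = .lab ℓ → ℓ ∈ s.inSet (s.after τ)) : τ ++ [x] ∈ s.Utraces := by
  refine LTS.snoc_mem_utraces_iff.2 ⟨hτ, hx, ?_, hin⟩
  cases x with
  | lab ℓ =>
    rcases hx with hI | hU
    · exact LTS.after_snoc_nonempty_of_mem_inSet hτ.2.1 (hin ℓ hI rfl)
    · have hout : .lab ℓ ∈ iS.outq p := ⟨h.U_eq ▸ hU, p', hstep⟩
      exact LTS.after_snoc_nonempty_of_mem_outSet (h.mem_outSet hτ hp hout)
  | delta => exact LTS.after_snoc_nonempty_of_mem_outSet (h.mem_outSet hτ hp hstep.2)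

theorem projD_snoc_mem_utraces (h : Implements iS s) (hσ : projD σ s.L ∈ s.Utraces)
    {p p' : Qis} {r r' : Qie} (hp : p ∈ iS.after (projD σ s.L)) (hstep : iS.LocalStep p x p')
    (hpartner : iE.LocalStep r x r') (hacc : ∀ q ∈ s.after (projD σ s.L), AcceptsAt s iE q r)
    (henv : ∀ ℓ ∈ s.I \ iE.U, x = .lab ℓ → ℓ ∈ s.inSet (s.after (projD σ s.L))) :
    projD (σ ++ [x]) s.L ∈ s.Utraces := by
  by_cases hx : x.inL s.L
  · rw [projD_snoc_of_inL hx]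
    refine h.snoc_mem_utraces hσ hp hx (hstep.vStep (h.L_eq ▸ hx)) ?_
    rintro ℓ hI rfl
    by_cases hU : ℓ ∈ iE.U
    · exact LTS.mem_inSet_iff.2 fun q hq => hacc q hq ℓ (hpartner.mem_outq hU) hI
    · exact henv ℓ ⟨hI, hU⟩ rfl
  · rwa [projD_snoc_of_not_inL hx]

theorem exists_output_localSteps (h : Implements iS s) (hse : Composable s e)
    (hτ : τ ∈ s.Utraces) {p : Qis} (hp : p ∈ iS.after τ) (hout : .lab ℓ ∈ iS.outq p)
    (hne : (e.after ρ).Nonempty) (hacc : ∀ n ∈ e.after ρ, AcceptsAt e iS n p) :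
    (∃ m ∈ s.after τ, ∃ m', s.LocalStep m (.lab ℓ) m') ∧
      ∃ n ∈ e.after ρ, ∃ n', e.LocalStep n (.lab ℓ) n' := by
  obtain ⟨m, hm, hU, m', hstep⟩ := LTS.mem_outSet_iff.1 (h.mem_outSet hτ hp hout)
  obtain ⟨n, hn⟩ := hne
  obtain ⟨n₁, n₂, hε, hstepE⟩ := (hacc n hn).exists_eps_localStep (h.composable_left hse) hout
  exact ⟨⟨m, hm, m', .inl ⟨.inr hU, hstep⟩⟩, ⟨n₁, hn.trans_eps hε, n₂, hstepE⟩⟩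

theorem acceptsAt (h : Implements iE e) (hse : Composable s e) (hacc : Accepts s iE)
    (htrace : TraceIn (s.L ∪ e.L) σ) (hσ : projD σ s.L ∈ s.Utraces) {r : Qie}
    (hr : r ∈ iE.after (projD σ e.L)) : ∀ m ∈ s.after (projD σ s.L), AcceptsAt s iE m r := by
  rw [← h.L_eq] at htrace hr
  exact fun m hm => LTS.acceptsAt_of_mem_after_projD (h.composable_right hse) h.inputEnabled
    hacc htrace hσ hm hr

theorem mem_after_projD_of_par (hS : Implements iS s) (hE : Implements iE e)
    (hse : Composable s e) {p : Qis} {r : Qie} (h : (p, r) ∈ (par iS iE).after σ) :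
    p ∈ iS.after (projD σ s.L) ∧ r ∈ iE.after (projD σ e.L) := by
  have hcomp : Composable iS iE := hS.composable_left (hE.composable_right hse)
  rw [← hS.L_eq, ← hE.L_eq]
  exact LTS.W.projD_of_par hcomp hE.inputEnabled hS.inputEnabled.acceptsOver h

theorem localStep_of_par (hS : Implements iS s) (hE : Implements iE e) (hse : Composable s e)
    {p p' : Qis} {r r' : Qie} (h : (par iS iE).VStep (p, r) x (p', r')) :
    iS.LocalStep p x p' ∧ iE.LocalStep r x r' :=
  h.localStep_of_par (hS.composable_left (hE.composable_right hse))
    hS.inputEnabled.acceptsAt hE.inputEnabled.acceptsAt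

theorem projD_mem_utraces (hS : Implements iS s) (hE : Implements iE e) (hse : Composable s e)
    (hsE : Accepts s iE) (heS : Accepts e iS) (hσ : σ ∈ (par s e).Utraces)
    (hne : ((par iS iE).after σ).Nonempty) :
    projD σ s.L ∈ s.Utraces ∧ projD σ e.L ∈ e.Utraces := by
  induction σ using List.reverseRecOn with
  | nil => exact ⟨LTS.nil_mem_utraces, LTS.nil_mem_utraces⟩
  | append_singleton σ x ih =>
    obtain ⟨_, hrun⟩ := hne
    obtain ⟨⟨p, r⟩, ⟨p', r'⟩, hpr, hstep, -⟩ := LTS.W_snoc_iff.1 hrun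
    have hσ' : σ ∈ (par s e).Utraces := LTS.mem_utraces_of_append hσ
    have htrace : TraceIn (s.L ∪ e.L) σ := LTS.par_L ▸ hσ'.1
    obtain ⟨hs, he⟩ := ih hσ' ⟨_, hpr⟩
    obtain ⟨hp, hr⟩ := hS.mem_after_projD_of_par hE hse hpr
    obtain ⟨hstepS, hstepE⟩ := hS.localStep_of_par hE hse hstep
    obtain ⟨m, hm⟩ := hs.2.1
    obtain ⟨n, hn⟩ := he.2.1
    constructor
    · refine hS.projD_snoc_mem_utraces hs hp hstepS hstepE
        (hE.acceptsAt hse hsE htrace hs hr) ?_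
      rintro ℓ ⟨hI, hU⟩ rfl
      exact LTS.mem_inSet_iff.2 fun q hq => (LTS.mem_inq_of_snoc_mem_par_utraces hσ
        (.inl ⟨hI, hE.U_eq ▸ hU⟩) hq hn).1 (.inl hI)
    · refine hE.projD_snoc_mem_utraces he hr hstepE hstepS
        (hS.acceptsAt hse.symm heS (Set.union_comm _ _ ▸ htrace) he hp) ?_
      rintro ℓ ⟨hI, hU⟩ rfl
      exact LTS.mem_inSet_iff.2 fun q hq => (LTS.mem_inq_of_snoc_mem_par_utraces hσ
        (.inr ⟨hI, hS.U_eq ▸ hU⟩) hm hq).2 (.inl hI)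

end Implements

theorem test_eco_implies_uioco_general (hS : Implements iS s) (hE : Implements iE e)
    (hse : Composable s e) (hsE : Accepts s iE) (heS : Accepts e iS) :
    Uioco (par iS iE) (par s e) := by
  intro σ hσ x hx
  obtain ⟨⟨p, r⟩, hpr, hout⟩ := LTS.mem_outSet_iff.1 hx
  have htrace : TraceIn (s.L ∪ e.L) σ := LTS.par_L ▸ hσ.1
  obtain ⟨hs, he⟩ := hS.projD_mem_utraces hE hse hsE heS hσ ⟨_, hpr⟩
  obtain ⟨hp, hr⟩ := hS.mem_after_projD_of_par hE hse hpr
  cases x with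
  | delta =>
    obtain ⟨hstepS, hstepE⟩ := hS.localStep_of_par hE hse (x := .delta) ⟨rfl, hout⟩
    exact LTS.delta_mem_par_outSet htrace (hS.mem_outSet hs hp (hstepS.vStep trivial).2)
      (hE.mem_outSet he hr (hstepE.vStep trivial).2)
  | lab ℓ =>
    obtain ⟨hU, ⟨p', r'⟩, hstep⟩ := hout
    obtain ⟨-, hstepS, hstepE⟩ := LTS.par_T_some_iff.1 hstep
    have hU' : ℓ ∈ s.U ∪ e.U := hS.U_eq ▸ hE.U_eq ▸ hU
    rcases hU with hU | hU
    · obtain ⟨⟨m, hm, m', hstepM⟩, n, hn, n', hstepN⟩ :=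
        hS.exists_output_localSteps hse hs hp (hstepS.mem_outq hU) he.2.1
          (hS.acceptsAt hse.symm heS (Set.union_comm _ _ ▸ htrace) he hp)
      exact LTS.lab_mem_par_outSet htrace hU' hm hstepM hn hstepN
    · obtain ⟨⟨n, hn, n', hstepN⟩, m, hm, m', hstepM⟩ :=
        hE.exists_output_localSteps hse.symm he hr (hstepE.mem_outq hU) hs.2.1
          (hE.acceptsAt hse hsE htrace hs hr)
      exact LTS.lab_mem_par_outSet htrace hU' hm hstepM hn hstepN

end Implementations

/-- if `i_s` mutually accepts `e`, `i_e` mutually accepts `s`,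
`i_s uioco s` and `i_e uioco e`, then `i_s ∥ i_e uioco s ∥ e`. -/
theorem test_eco_implies_uioco
    {Qs Qe Qis Qie Lab : Type}
    (s : LTS Qs Lab) (e : LTS Qe Lab) (iS : LTS Qis Lab) (iE : LTS Qie Lab)
    (hs : s.WellFormed) (he : e.WellFormed)
    (hiS : iS.WellFormed) (hiE : iE.WellFormed)
    (hcomp : Composable s e)
    (hiSenabled : iS.InputEnabled) (hiEenabled : iE.InputEnabled)
    (hI1 : iS.I = s.I) (hU1 : iS.U = s.U)
    (hI2 : iE.I = e.I) (hU2 : iE.U = e.U)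
    (hma1 : MutuallyAccepts iS e) (hma2 : MutuallyAccepts iE s)
    (huioco1 : Uioco iS s) (huioco2 : Uioco iE e) :
    Uioco (par iS iE) (par s e) := by
  exact test_eco_implies_uioco_general ⟨hI1, hU1, hiSenabled, huioco1⟩
    ⟨hI2, hU2, hiEenabled, huioco2⟩ hcomp hma2.2 hma1.2
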